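/- Let I_n^t, V_n^t be a solution of the hpdToda equation. Then for all t ∈ ℤ and all nonzero y ∈ ℂ, L_t(y)·X_{t+M}(y) = X_t(y)·L_t(y); that is, conjugation of X_t(y) by L_t(y)^{−1} realizes the time evolution t ↦ t+M whenever L_t(y) is invertible. -/

import Mathlib

/-!
The evolution rests on the local Lax relation `L_{t+1} R_{t+M} = R_t L_t`
(`lax_relation`). With `S` the twisted cyclic shift `Stoda` and `T` its inverse, one has
`R_t = diag(I_n^t) + S` and `L_t = 1 + T diag(V_n^t)`. Since `S diag(a_n) = diag(a_{n+1}) S`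
for `N`-periodic `a`, expanding both products and comparing the coefficients of `S`, `1`
and `T` gives exactly the two hpdToda equations.

Applying the relation repeatedly moves `L` through the product of the `R`'s:
`R_{t+k-1} ⋯ R_t L_t = L_{t+k} R_{t+M+k-1} ⋯ R_{t+M}`. For `k = M` the right-hand side is
`X_{t+M}`, and multiplying by `L_t` on the left gives the claim.
-/

open Matrix Finset Filter

/-- The matrix `L_t(y)`: `(n,n)`-entry `1`, `(n+1,n)`-entry `V_n^t` for `n = 1,…,N-1`,
`(1,N)`-entry `V_N^t / y` (indices written 1-based; here realized 0-based on `Fin N`). -/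
noncomputable def Ltoda (N : ℕ) (V : ℤ → ℤ → ℂ) (t : ℤ) (y : ℂ) :
    Matrix (Fin N) (Fin N) ℂ := fun i j =>
  (if i = j then 1 else 0) +
  (if (i : ℕ) = (j : ℕ) + 1 then V ((j : ℕ) + 1) t else 0) +
  (if (i : ℕ) = 0 ∧ (j : ℕ) = N - 1 then V N t / y else 0)

/-- The matrix `R_t(y)`: `(n,n)`-entry `I_n^t`, `(n,n+1)`-entry `1` for `n = 1,…,N-1`,
`(N,1)`-entry `y`. -/
noncomputable def Rtoda (N : ℕ) (I : ℤ → ℤ → ℂ) (t : ℤ) (y : ℂ) :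
    Matrix (Fin N) (Fin N) ℂ := fun i j =>
  (if i = j then I ((i : ℕ) + 1) t else 0) +
  (if (j : ℕ) = (i : ℕ) + 1 then 1 else 0) +
  (if (i : ℕ) = N - 1 ∧ (j : ℕ) = 0 then y else 0)

/-- The shift matrix `S(y)`: `(n,n+1)`-entry `1` for `n = 1,…,N-1`, `(N,1)`-entry `y`. -/
def Stoda (N : ℕ) (y : ℂ) : Matrix (Fin N) (Fin N) ℂ := fun i j =>
  (if (j : ℕ) = (i : ℕ) + 1 then 1 else 0) +
  (if (i : ℕ) = N - 1 ∧ (j : ℕ) = 0 then y else 0)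

/-- `Rprod N I t y k = R_{t+k-1}(y) ⋯ R_{t+1}(y) · R_t(y)`. -/
noncomputable def Rprod (N : ℕ) (I : ℤ → ℤ → ℂ) (t : ℤ) (y : ℂ) :
    ℕ → Matrix (Fin N) (Fin N) ℂ
  | 0 => 1
  | k + 1 => Rtoda N I (t + k) y * Rprod N I t y k

/-- `X_t(y) = L_t(y) · R_{t+M-1}(y) ⋯ R_{t+1}(y) · R_t(y)`. -/
noncomputable def Xtoda (N M : ℕ) (I V : ℤ → ℤ → ℂ) (t : ℤ) (y : ℂ) :
    Matrix (Fin N) (Fin N) ℂ :=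
  Ltoda N V t y * Rprod N I t y M

/-- `(I, V)` is a solution of the hungry periodic discrete Toda equation `Toda_{N,M}`. -/
def IsToda (N M : ℕ) (I V : ℤ → ℤ → ℂ) : Prop :=
  ∀ n t : ℤ,
    I n (t + M) = I n t + V n t - V (n - 1) (t + 1) ∧
    V n (t + 1) * I n (t + M) = I (n + 1) t * V n t ∧
    I (n + N) t = I n t ∧ V (n + N) t = V n t

/-- The inverse of the shift matrix `Stoda N y` (for `y ≠ 0`): `(n+1,n)`-entry `1`,
`(1,N)`-entry `1/y`, in 1-based indices. -/
noncomputable def Ttoda (N : ℕ) (y : ℂ) : Matrix (Fin N) (Fin N) ℂ := fun i j =>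
  (if (i : ℕ) = (j : ℕ) + 1 then 1 else 0) +
  (if (i : ℕ) = 0 ∧ (j : ℕ) = N - 1 then 1 / y else 0)

lemma Stoda_apply (m : ℕ) (y : ℂ) (i j : Fin (m + 1)) :
    Stoda (m + 1) y i j = if j = i + 1 then (if i = Fin.last m then y else 1) else 0 := by
  have hi := i.isLt
  have hj := j.isLt
  simp only [Stoda, Fin.ext_iff, Fin.val_add_one, Fin.val_last, Nat.add_sub_cancel]
  split_ifs <;> first | omega | simp

lemma Ttoda_apply (m : ℕ) (y : ℂ) (i j : Fin (m + 1)) :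
    Ttoda (m + 1) y i j = if i = j + 1 then (if j = Fin.last m then 1 / y else 1) else 0 := by
  have hi := i.isLt
  have hj := j.isLt
  simp only [Ttoda, Fin.ext_iff, Fin.val_add_one, Fin.val_last, Nat.add_sub_cancel]
  split_ifs <;> first | omega | simp

lemma Stoda_mul_Ttoda (m : ℕ) (y : ℂ) (hy : y ≠ 0) :
    Stoda (m + 1) y * Ttoda (m + 1) y = 1 := by
  ext i j
  simp only [Matrix.mul_apply, Stoda_apply, Ttoda_apply, Matrix.one_apply, ite_mul, zero_mul,
    Finset.sum_ite_eq', Finset.mem_univ, if_true, add_left_inj]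
  by_cases h : i = j
  · subst h
    by_cases h' : i = Fin.last m <;> simp [h', hy]
  · simp [h]

/-- The diagonal matrix with `n`-th entry `a n`, `n = 1,…,N` (1-based). -/
noncomputable def diagToda (N : ℕ) (a : ℤ → ℂ) : Matrix (Fin N) (Fin N) ℂ :=
  Matrix.diagonal fun i => a ((i : ℕ) + 1)

lemma Rtoda_eq (N : ℕ) (I : ℤ → ℤ → ℂ) (t : ℤ) (y : ℂ) :
    Rtoda N I t y = diagToda N (fun n => I n t) + Stoda N y := by
  ext i j
  simp [Rtoda, Stoda, diagToda, Matrix.diagonal_apply, add_assoc]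

lemma Ltoda_eq (m : ℕ) (V : ℤ → ℤ → ℂ) (t : ℤ) (y : ℂ) :
    Ltoda (m + 1) V t y = 1 + Ttoda (m + 1) y * diagToda (m + 1) (fun n => V n t) := by
  ext i j
  simp only [Ltoda, Ttoda, diagToda, Matrix.mul_diagonal, Matrix.add_apply, Matrix.one_apply,
    Nat.add_sub_cancel, add_mul, ite_mul, one_mul, zero_mul, add_assoc]
  congr 2
  by_cases h' : (i : ℕ) = 0 ∧ (j : ℕ) = m
  · simp only [h', and_self, if_true]
    push_cast
    ring
  · simp only [h', if_false]

lemma Stoda_mul_diagToda (m : ℕ) (y : ℂ) (a : ℤ → ℂ) (ha : ∀ n, a (n + (m + 1 : ℕ)) = a n) :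
    Stoda (m + 1) y * diagToda (m + 1) a =
      diagToda (m + 1) (fun n => a (n + 1)) * Stoda (m + 1) y := by
  ext i j
  simp only [diagToda, Matrix.mul_diagonal, Matrix.diagonal_mul, Stoda_apply]
  by_cases h : j = i + 1
  · subst h
    simp only [if_true, Fin.val_add_one]
    by_cases h' : i = Fin.last m
    · -- wrap-around entry: the indices `1` and `N + 1` are identified by periodicity
      have h1 := ha 1
      subst h'
      simp only [if_true, Fin.val_last]
      push_cast at h1 ⊢
      rw [← h1, mul_comm]
      congr 2
      ring
    · simp [h']
  · simp [h]

/-- The local Lax relation `L_{t+1} R_{t+M} = R_t L_t`. -/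
lemma lax_relation (N M : ℕ) (hN : 0 < N) (I V : ℤ → ℤ → ℂ) (hsol : IsToda N M I V)
    (t : ℤ) (y : ℂ) (hy : y ≠ 0) :
    Ltoda N V (t + 1) y * Rtoda N I (t + M) y = Rtoda N I t y * Ltoda N V t y := by
  obtain ⟨m, rfl⟩ : ∃ m, N = m + 1 := ⟨N - 1, by omega⟩
  rw [Ltoda_eq, Ltoda_eq, Rtoda_eq, Rtoda_eq]
  have hST := Stoda_mul_Ttoda m y hy
  have hTS : Ttoda (m + 1) y * Stoda (m + 1) y = 1 := mul_eq_one_comm.mp hST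
  have hI := Stoda_mul_diagToda m y (fun n => I n t) (fun n => (hsol n t).2.2.1)
  have hV := Stoda_mul_diagToda m y (fun n => V (n - 1) (t + 1)) (fun n => by
    have := (hsol (n - 1) (t + 1)).2.2.2
    rw [← this]; congr 1; ring)
  simp only [add_sub_cancel_right] at hV
  have h1 : diagToda (m + 1) (fun n => I n (t + M)) + diagToda (m + 1) (fun n => V (n - 1) (t + 1))
      = diagToda (m + 1) (fun n => I n t) + diagToda (m + 1) (fun n => V n t) := by
    simp only [diagToda, Matrix.diagonal_add]
    congr 1
    funext i
    rw [(hsol _ t).1]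
    ring
  have h2 : diagToda (m + 1) (fun n => V n (t + 1)) * diagToda (m + 1) (fun n => I n (t + M))
      = diagToda (m + 1) (fun n => I (n + 1) t) * diagToda (m + 1) (fun n => V n t) := by
    simp only [diagToda, Matrix.diagonal_mul_diagonal]
    congr 1
    funext i
    exact (hsol _ t).2.1
  revert hST hTS hI hV h1 h2
  generalize Stoda (m + 1) y = S
  generalize Ttoda (m + 1) y = T
  generalize diagToda (m + 1) (fun n => I n (t + M)) = I'
  generalize diagToda (m + 1) (fun n => V (n - 1) (t + 1)) = W
  generalize diagToda (m + 1) (fun n => I n t) = J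
  generalize diagToda (m + 1) (fun n => V n t) = U
  generalize diagToda (m + 1) (fun n => V n (t + 1)) = V'
  generalize diagToda (m + 1) (fun n => I (n + 1) t) = K
  intro hST hTS hI hV h1 h2
  have hJT : J * T = T * K := by
    calc J * T = (T * S) * J * T := by rw [hTS, one_mul]
      _ = T * (S * J) * T := by simp only [mul_assoc]
      _ = T * K := by rw [hI, mul_assoc, mul_assoc, hST, mul_one]
  have hTV : T * V' * S = W := by
    rw [mul_assoc, ← hV, ← mul_assoc, hTS, one_mul]
  calc (1 + T * V') * (I' + S) = (I' + T * V' * S) + S + T * (V' * I') := by noncomm_ring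
    _ = (J + U) + S + J * T * U := by rw [hTV, h1, h2, hJT, mul_assoc]
    _ = J + (S * T) * U + S + J * T * U := by rw [hST, one_mul]
    _ = (J + S) * (1 + T * U) := by noncomm_ring

/-- Moving `L_t` to the left through `k` factors `R`. -/
lemma Rprod_mul_Ltoda (N M : ℕ) (hN : 0 < N) (I V : ℤ → ℤ → ℂ) (hsol : IsToda N M I V)
    (t : ℤ) (y : ℂ) (hy : y ≠ 0) (k : ℕ) :
    Rprod N I t y k * Ltoda N V t y = Ltoda N V (t + k) y * Rprod N I (t + M) y k := by
  induction k with
  | zero => simp [Rprod]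
  | succ k ih =>
    have h := lax_relation N M hN I V hsol (t + k) y hy
    rw [Rprod, Rprod, mul_assoc, ih, ← mul_assoc, ← h, mul_assoc]
    rw [add_right_comm t (k : ℤ) (M : ℤ)]
    push_cast
    rw [add_assoc t (k : ℤ) 1]

/-- for a solution of hpdToda, `L_t(y) X_{t+M}(y) = X_t(y) L_t(y)`. -/
theorem stmt2 (N M : ℕ) (hN : 0 < N) (hM : 0 < M) (I V : ℤ → ℤ → ℂ)
    (hsol : IsToda N M I V) :
    ∀ (t : ℤ) (y : ℂ), y ≠ 0 →
      Ltoda N V t y * Xtoda N M I V (t + M) y = Xtoda N M I V t y * Ltoda N V t y := by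
  intro t y hy
  rw [Xtoda, Xtoda, mul_assoc, Rprod_mul_Ltoda N M hN I V hsol t y hy M]
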